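/- arXiv:2310.09451 — 2 statements merged into one kernel-verified Lean document; each statement's English description precedes it below -/
import Mathlib

section
/- Let $G$ be a group and suppose that the group ring $F[G]$ is stably finite for every finite field $F$. Then the group ring $K[G]$ is stably finite for every field $K$. -/
/-- A ring `R` is stably finite if for every `d ≥ 1` and all `d × d` matrices `A B` over `R`,
`A * B = 1` implies `B * A = 1`. -/
def IsStablyFinite (R : Type*) [Ring R] : Prop :=
  ∀ d : ℕ, 1 ≤ d → ∀ A B : Matrix (Fin d) (Fin d) R, A * B = 1 → B * A = 1

/-!
Let `A * B = 1` over `R[M]`, where `R` is a commutative ring. The scalars involved lie in a finitely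
generated subring of `R`, so `R` may be assumed of finite type over `ℤ`; its residue fields are then
finite by Zariski's lemma over the Jacobson ring `ℤ`. By hypothesis `e = 1 - B * A` vanishes over
every residue field, so the ideal `I` generated by its coefficients lies in the Jacobson radical.
Since `e` is idempotent, `I ≤ I * I`, and Nakayama's lemma gives `I = 0`.
-/

theorem isStablyFinite_iff_isStablyFiniteRing (R : Type*) [Ring R] :
    IsStablyFinite R ↔ IsStablyFiniteRing R := by
  refine ⟨fun h ↦ ⟨fun n ↦ ⟨fun {A B} hAB ↦ ?_⟩⟩, fun _ _ _ _ _ ↦ mul_eq_one_symm⟩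
  rcases n.eq_zero_or_pos with rfl | hn
  · exact Subsingleton.elim _ _
  · exact h n hn A B hAB

theorem isJacobsonRing_of_dimensionLEOne (R : Type*) [CommRing R] [Ring.DimensionLEOne R]
    (h : (⊥ : Ideal R).jacobson = ⊥) : IsJacobsonRing R := by
  rw [isJacobsonRing_iff_prime_eq]
  intro P hP
  by_cases hbot : P = ⊥
  · rwa [hbot]
  · have := hP.isMaximal hbot
    exact Ideal.jacobson_eq_self_of_isMaximal

theorem jacobson_bot_int : (⊥ : Ideal ℤ).jacobson = ⊥ := by
  refine le_antisymm (fun x hx ↦ ?_) Ideal.le_jacobson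
  have hunit : IsUnit (x * x + 1) := Ideal.mem_jacobson_bot.1 hx x
  rw [Ideal.mem_bot]
  rcases Int.isUnit_iff.1 hunit with h | h
  · exact mul_self_eq_zero.1 (by linarith)
  · nlinarith [mul_self_nonneg x]

theorem finite_of_field_of_module_finite (R F : Type*) [CommRing R] [Ring.HasFiniteQuotients R]
    (hR : ¬IsField R) [Field F] [Algebra R F] [Module.Finite R F] : Finite F := by
  let I : Ideal R := RingHom.ker (algebraMap R F)
  have hI : I ≠ ⊥ := fun hbot ↦
    hR (isField_of_isIntegral_of_isField ((RingHom.injective_iff_ker_eq_bot _).2 hbot)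
      (Field.toIsField F))
  have : Finite (R ⧸ I) := Ring.HasFiniteQuotients.finiteQuotient hI
  let : Algebra (R ⧸ I) F := (RingHom.kerLift (algebraMap R F)).toAlgebra
  have : IsScalarTower R (R ⧸ I) F := .of_algebraMap_eq fun _ ↦ rfl
  have : Module.Finite (R ⧸ I) F := .of_restrictScalars_finite R (R ⧸ I) F
  exact Module.finite_of_finite (R ⧸ I)

theorem finite_quotient_of_finiteType_int {S : Type*} [CommRing S] [Algebra.FiniteType ℤ S]
    (m : Ideal S) [m.IsMaximal] : Finite (S ⧸ m) := by
  let := Ideal.Quotient.field m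
  have := isJacobsonRing_of_dimensionLEOne ℤ jacobson_bot_int
  have := finite_of_finite_type_of_isJacobsonRing ℤ (S ⧸ m)
  exact finite_of_field_of_module_finite ℤ (S ⧸ m) Int.not_isField

theorem basis_repr_mul_mem_mul {R A ι : Type*} [CommSemiring R] [Semiring A] [Algebra R A]
    (b : Module.Basis ι R A) {I J : Ideal R} {x y : A} (hx : ∀ i, b.repr x i ∈ I)
    (hy : ∀ i, b.repr y i ∈ J) (k : ι) : b.repr (x * y) k ∈ I * J := by
  rw [← b.linearCombination_repr x, ← b.linearCombination_repr y]
  simp only [Finsupp.linearCombination_apply, Finsupp.sum, Finset.sum_mul_sum, smul_mul_smul_comm,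
    map_sum, map_smul, Finsupp.finsetSum_apply, Finsupp.smul_apply, smul_eq_mul]
  exact sum_mem fun i _ ↦ sum_mem fun j _ ↦
    Ideal.mul_mem_right _ _ (Ideal.mul_mem_mul (hx i) (hy j))

theorem eq_zero_of_isIdempotentElem_of_repr_mem_jacobson {R A ι : Type*} [CommRing R]
    [Semiring A] [Algebra R A] (b : Module.Basis ι R A) {e : A} (he : IsIdempotentElem e)
    (hrepr : ∀ i, b.repr e i ∈ (⊥ : Ideal R).jacobson) : e = 0 := by
  let I : Ideal R := Ideal.span (Set.range (b.repr e))
  have hI_fg : I.FG := Submodule.fg_span (b.repr e).finite_range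
  have hmem : ∀ i, b.repr e i ∈ I := fun i ↦ Ideal.subset_span ⟨i, rfl⟩
  have hI_mul : I ≤ I * I := Ideal.span_le.2 <| Set.range_subset_iff.2 fun i ↦ by
    have hmul := basis_repr_mul_mem_mul b hmem hmem i
    rwa [he.eq] at hmul
  have hI_jacobson : I ≤ (⊥ : Ideal R).jacobson :=
    Ideal.span_le.2 (Set.range_subset_iff.2 hrepr)
  have hI_bot : I = ⊥ :=
    Submodule.eq_bot_of_le_smul_of_le_jacobson_bot I I hI_fg hI_mul hI_jacobson
  exact b.ext_elem fun i ↦ by simpa [hI_bot] using hmem i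

section MonoidAlgebra

theorem exists_fg_subalgebra_forall_coeff_mem (k : Type*) {R M ι : Type*} [CommSemiring k]
    [Semiring R] [Algebra k R] [Finite ι] (x : ι → MonoidAlgebra R M) :
    ∃ S : Subalgebra k R, S.FG ∧ ∀ i g, (x i).coeff g ∈ S :=
  ⟨Algebra.adjoin k (⋃ i, Set.range (x i).coeff),
    Subalgebra.fg_def.2 ⟨_, Set.finite_iUnion fun i ↦ (x i).coeff.finite_range, rfl⟩,
    fun i g ↦ Algebra.subset_adjoin (Set.mem_iUnion_of_mem i ⟨g, rfl⟩)⟩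

variable {M : Type*} [Monoid M]

theorem eq_zero_of_isIdempotentElem_of_coeff_mem_jacobson {R n : Type*} [CommRing R] [Fintype n]
    {E : Matrix n n (MonoidAlgebra R M)} (hE : IsIdempotentElem E)
    (hcoeff : ∀ i j g, (E i j).coeff g ∈ (⊥ : Ideal R).jacobson) : E = 0 := by
  classical
  exact eq_zero_of_isIdempotentElem_of_repr_mem_jacobson ((MonoidAlgebra.basis M R).matrix n n) hE
    fun ⟨i, j, g⟩ ↦ hcoeff i j g

theorem isStablyFiniteRing_monoidAlgebra_of_forall_isMaximal {R : Type*} [CommRing R]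
    (h : ∀ m : Ideal R, m.IsMaximal → IsStablyFiniteRing (MonoidAlgebra (R ⧸ m) M)) :
    IsStablyFiniteRing (MonoidAlgebra R M) := by
  refine ⟨fun n ↦ ⟨fun {A B} hAB ↦ ?_⟩⟩
  have he : IsIdempotentElem (1 - B * A) := IsIdempotentElem.one_sub <| by
    rw [IsIdempotentElem, mul_assoc, ← mul_assoc A, hAB, one_mul]
  suffices he_zero : 1 - B * A = 0 from (sub_eq_zero.1 he_zero).symm
  refine eq_zero_of_isIdempotentElem_of_coeff_mem_jacobson he fun i j g ↦
    Ideal.mem_sInf.2 fun {m} ⟨_, hm⟩ ↦ ?_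
  have := h m hm
  let φ := (MonoidAlgebra.mapRingHom M (Ideal.Quotient.mk m)).mapMatrix (m := Fin n)
  have hφ : φ (1 - B * A) = 0 := by
    rw [map_sub, map_mul, map_one, sub_eq_zero, eq_comm]
    exact mul_eq_one_symm (by rw [← map_mul, hAB, map_one])
  have hentry : MonoidAlgebra.mapRingHom M (Ideal.Quotient.mk m) ((1 - B * A) i j) = 0 :=
    congr_fun₂ hφ i j
  rw [← Ideal.Quotient.eq_zero_iff_mem, ← MonoidAlgebra.coeff_mapRingHom, hentry]
  rfl

theorem isStablyFiniteRing_monoidAlgebra_of_forall_fg_subalgebra (k : Type*) {R : Type*}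
    [CommSemiring k] [Semiring R] [Algebra k R]
    (h : ∀ S : Subalgebra k R, S.FG → IsStablyFiniteRing (MonoidAlgebra S M)) :
    IsStablyFiniteRing (MonoidAlgebra R M) := by
  refine ⟨fun n ↦ ⟨fun {A B} hAB ↦ ?_⟩⟩
  obtain ⟨S, hS, hcoeff⟩ := exists_fg_subalgebra_forall_coeff_mem k
    (Sum.elim (Function.uncurry A) (Function.uncurry B))
  have := h S hS
  let φ := (MonoidAlgebra.mapRingHom M (S.val : S →+* R)).mapMatrix (m := Fin n)
  have hφ : Function.Injective φ := Matrix.map_injective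
    (MonoidAlgebra.map_injective ((S.val : S →+* R) : S →+ R) Subtype.val_injective)
  have hlift (C : Matrix (Fin n) (Fin n) (MonoidAlgebra R M))
      (hC : ∀ i j g, (C i j).coeff g ∈ S) : ∃ C', φ C' = C := by
    have hC' (i j) : C i j ∈ Set.range (MonoidAlgebra.mapRingHom M (S.val : S →+* R)) := by
      rw [MonoidAlgebra.coe_mapRingHom, MonoidAlgebra.range_map]
      exact fun g ↦ ⟨⟨_, hC i j g⟩, rfl⟩
    choose C' hC' using hC'
    exact ⟨Matrix.of C', Matrix.ext hC'⟩
  obtain ⟨A, rfl⟩ := hlift A fun i j ↦ hcoeff (.inl (i, j))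
  obtain ⟨B, rfl⟩ := hlift B fun i j ↦ hcoeff (.inr (i, j))
  rw [← map_mul, map_eq_one_iff φ hφ] at hAB ⊢
  exact mul_eq_one_symm hAB

end MonoidAlgebra

theorem stably_finite_of_finite_fields_stably_finite_general {M : Type*} [Monoid M]
    (h : ∀ (F : Type) [Field F] [Finite F], IsStablyFinite (MonoidAlgebra F M))
    (R : Type*) [CommRing R] : IsStablyFinite (MonoidAlgebra R M) := by
  rw [isStablyFinite_iff_isStablyFiniteRing]
  refine isStablyFiniteRing_monoidAlgebra_of_forall_fg_subalgebra ℤ fun S hS ↦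
    isStablyFiniteRing_monoidAlgebra_of_forall_isMaximal fun m _ ↦ ?_
  let := Ideal.Quotient.field m
  have : Algebra.FiniteType ℤ S := S.fg_iff_finiteType.1 hS
  have := finite_quotient_of_finiteType_int m
  rw [← RingEquiv.isStablyFiniteRing_iff
    (MonoidAlgebra.mapRingEquiv M (Shrink.ringEquiv.{0} (S ⧸ m)))]
  exact (isStablyFinite_iff_isStablyFiniteRing _).1 (h (Shrink.{0} (S ⧸ m)))

theorem stably_finite_of_finite_fields_stably_finite
    {G : Type*} [Group G]
    (h : ∀ (F : Type) [Field F] [Finite F], IsStablyFinite (MonoidAlgebra F G)) :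
    ∀ (K : Type*) [Field K], IsStablyFinite (MonoidAlgebra K G) :=
  fun K _ ↦ stably_finite_of_finite_fields_stably_finite_general h K
end

section
/- Let $G$ be a surjunctive group and let $K$ be a finite field. Then the group ring $K[G]$ is stably finite. -/
/-- A group `G` is surjunctive if for every finite set `A`, every injective `G`-equivariant
map `τ : A^G → A^G` which is continuous for the prodiscrete topology is surjective. -/
def Surjunctive (G : Type*) [Group G] : Prop :=
  ∀ (A : Type) [Finite A] (τ : (G → A) → (G → A)),
    Function.Injective τ →
    (∀ (g : G) (x : G → A), τ (fun h => x (g * h)) = fun h => τ x (g * h)) →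
    @Continuous (G → A) (G → A)
      (@Pi.topologicalSpace G (fun _ => A) fun _ => ⊥)
      (@Pi.topologicalSpace G (fun _ => A) fun _ => ⊥) τ →
    Function.Surjective τ

theorem Surjunctive.surjective {G A : Type*} [Group G] (hG : Surjunctive G)
    [Finite A] [TopologicalSpace A] [DiscreteTopology A] {τ : (G → A) → G → A}
    (hτ_inj : Function.Injective τ)
    (hτ_equiv : ∀ (g : G) (x : G → A), τ (fun h => x (g * h)) = fun h => τ x (g * h))
    (hτ_cont : Continuous τ) : Function.Surjective τ := by
  -- `Surjunctive` only quantifies over alphabets in `Type`, so `A` is replaced by `Fin n`.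
  obtain ⟨n, ⟨e⟩⟩ := Finite.exists_equiv_fin A
  let E : (G → A) ≃ₜ (G → Fin n) := .piCongrRight fun _ => e.toHomeomorphOfDiscrete
  have h_surj : Function.Surjective (E ∘ τ ∘ E.symm) :=
    hG (Fin n) (E ∘ τ ∘ E.symm) (E.injective.comp (hτ_inj.comp E.symm.injective))
      (fun g y => congrArg E (hτ_equiv g (E.symm y)))
      (E.continuous.comp (hτ_cont.comp E.symm.continuous))
  simpa using h_surj

/-- The action of `G` on `A^G` by right translations, `(s • x) h = x (h * s)`. -/
def rightTranslation (G A : Type*) [Monoid G] [AddZeroClass A] : G →* AddMonoid.End (G → A) where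
  toFun s :=
    { toFun x h := x (h * s)
      map_zero' := rfl
      map_add' _ _ := rfl }
  map_one' := AddMonoidHom.ext fun x => funext fun h => congrArg x (mul_one h)
  map_mul' s t := AddMonoidHom.ext fun x => funext fun h => congrArg x (mul_assoc h s t).symm

section ConvolutionAction

variable {G R : Type*} [Monoid G] [Semiring R]

variable (G R) in
/-- The action of `R[G]` on `R^G` by convolution, which combines left multiplication by scalars with
right translations. -/
noncomputable def convolutionAction : MonoidAlgebra R G →+* AddMonoid.End (G → R) :=
  MonoidAlgebra.liftNCRingHom (Module.toAddMonoidEnd R (G → R)) (rightTranslation G R)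
    fun _ _ => (commute_iff_eq _ _).mpr rfl

theorem convolutionAction_single_apply (s : G) (r : R) (x : G → R) (h : G) :
    convolutionAction G R (MonoidAlgebra.single s r) x h = r * x (h * s) := by
  rw [convolutionAction, MonoidAlgebra.liftNCRingHom_single]
  rfl

theorem convolutionAction_apply (a : MonoidAlgebra R G) (x : G → R) (h : G) :
    convolutionAction G R a x h = a.coeff.sum fun s r => r * x (h * s) := by
  induction a using MonoidAlgebra.induction_linear with
  | zero => simp
  | add a b ha hb =>
    calc convolutionAction G R (a + b) x h
      _ = convolutionAction G R a x h + convolutionAction G R b x h := by rw [map_add]; rfl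
      _ = (a + b).coeff.sum fun s r => r * x (h * s) := by
        rw [ha, hb, MonoidAlgebra.coeff_add, Finsupp.sum_add_index' (by simp) (by simp [add_mul])]
  | single s r =>
    rw [convolutionAction_single_apply, MonoidAlgebra.coeff_single,
      Finsupp.sum_single_index (zero_mul _)]

theorem convolutionAction_piSingle_apply_one [DecidableEq G] (a : MonoidAlgebra R G) (s : G) :
    convolutionAction G R a (Pi.single s 1) 1 = a.coeff s := by
  simp [convolutionAction_apply, Pi.single_apply]

theorem convolutionAction_injective : Function.Injective (convolutionAction G R) := by
  classical
  intro a b hab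
  ext s
  rw [← convolutionAction_piSingle_apply_one a, hab, convolutionAction_piSingle_apply_one]

theorem convolutionAction_leftTranslate (a : MonoidAlgebra R G) (g : G) (x : G → R) :
    convolutionAction G R a (fun h => x (g * h)) = fun h => convolutionAction G R a x (g * h) := by
  ext h
  simp only [convolutionAction_apply, mul_assoc]

theorem continuous_convolutionAction [TopologicalSpace R] [IsTopologicalSemiring R]
    (a : MonoidAlgebra R G) : Continuous (convolutionAction G R a) := by
  refine continuous_pi fun h => ?_
  simp only [convolutionAction_apply, Finsupp.sum]
  fun_prop

end ConvolutionAction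

theorem Surjunctive.isDedekindFiniteMonoid_monoidAlgebra {G : Type*} [Group G]
    (hG : Surjunctive G) (R : Type*) [Semiring R] [Finite R] :
    IsDedekindFiniteMonoid (MonoidAlgebra R G) where
  mul_eq_one_symm {a b} hab := by
    let : TopologicalSpace R := ⊥
    have : DiscreteTopology R := ⟨rfl⟩
    have h_mul : convolutionAction G R a * convolutionAction G R b = 1 := by
      rw [← map_mul, hab, map_one]
    have h_left : Function.LeftInverse (convolutionAction G R a) (convolutionAction G R b) :=
      DFunLike.congr_fun h_mul
    have h_surj : Function.Surjective (convolutionAction G R b) :=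
      hG.surjective h_left.injective (convolutionAction_leftTranslate b)
        (continuous_convolutionAction b)
    apply convolutionAction_injective
    rw [map_mul, map_one]
    exact DFunLike.ext _ _ (h_left.rightInverse_of_surjective h_surj)

section MatrixCoefficients

variable {n G R : Type*} [Fintype n] [DecidableEq n] [Monoid G] [Semiring R]

variable (n G R) in
/-- The canonical map `M_n(R)[G] → M_n(R[G])`, which turns an element with matrix coefficients into
the matrix of its entries. -/
noncomputable def matrixCoeffHom :
    MonoidAlgebra (Matrix n n R) G →+* Matrix n n (MonoidAlgebra R G) :=
  MonoidAlgebra.liftNCRingHom MonoidAlgebra.singleOneRingHom.mapMatrix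
    ((Matrix.scalar n).toMonoidHom.comp (MonoidAlgebra.of R G)) fun M s => by
      ext : 2
      simp [Matrix.scalar_apply]

theorem matrixCoeffHom_apply (a : MonoidAlgebra (Matrix n n R) G) (i j : n) :
    matrixCoeffHom n G R a i j = a.map (Matrix.entryAddMonoidHom R i j) := by
  induction a using MonoidAlgebra.induction_linear with
  | zero => simp
  | add a b ha hb => simp [ha, hb, MonoidAlgebra.map_add]
  | single s M => simp [matrixCoeffHom, Matrix.scalar_apply]

theorem matrixCoeffHom_bijective : Function.Bijective (matrixCoeffHom n G R) := by
  constructor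
  · intro a b hab
    ext s i j
    have h := congrArg (fun M => (M i j).coeff s) hab
    simpa [matrixCoeffHom_apply] using h
  · intro M
    refine ⟨∑ i, ∑ j, (M i j).map (Matrix.singleAddMonoidHom i j), ?_⟩
    ext i j s
    simp [matrixCoeffHom_apply, Finsupp.finsetSum_apply, Matrix.single_apply, ite_and]

end MatrixCoefficients

theorem Surjunctive.isStablyFiniteRing_monoidAlgebra {G : Type*} [Group G]
    (hG : Surjunctive G) (R : Type*) [Semiring R] [Finite R] :
    IsStablyFiniteRing (MonoidAlgebra R G) where
  isDedekindFiniteMonoid d :=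
    (MulEquivClass.isDedekindFiniteMonoid_iff
      (RingEquiv.ofBijective (matrixCoeffHom (Fin d) G R) matrixCoeffHom_bijective)).mp
      (hG.isDedekindFiniteMonoid_monoidAlgebra (Matrix (Fin d) (Fin d) R))

theorem surjunctive_group_ring_finite_field_stably_finite_general
    {G : Type*} [Group G] (hG : Surjunctive G)
    (R : Type*) [Ring R] [Finite R] : IsStablyFinite (MonoidAlgebra R G) := by
  have := hG.isStablyFiniteRing_monoidAlgebra R
  exact fun _ _ _ _ => mul_eq_one_symm

theorem surjunctive_group_ring_finite_field_stably_finite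
    {G : Type*} [Group G] (hG : Surjunctive G)
    (K : Type*) [Field K] [Finite K] : IsStablyFinite (MonoidAlgebra K G) :=
  surjunctive_group_ring_finite_field_stably_finite_general hG K
end
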